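/- Let σ : ℝ → ℝ be a continuous squashing function, i.e., σ is monotone nondecreasing, σ(t) → 0 as t → −∞, and σ(t) → 1 as t → +∞. Let d be a natural number, let K ⊆ ℝ^d (i.e., K ⊆ (Fin d → ℝ)) be a compact set, let g : (Fin d → ℝ) → ℝ be continuous, and let ε > 0. Then there exist a natural number M ≥ 1, output weights c : Fin M → ℝ, input weights w : Fin M → (Fin d → ℝ), and biases b : Fin M → ℝ such that for every x ∈ K, |(∑ m, c m * σ ((∑ i, w m i * x i) + b m)) − g x| ≤ ε. -/

import Mathlib

/-!
The proof reduces to one input variable by the Stone–Weierstrass theorem. The functions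
`x ↦ exp (w ⬝ᵥ x)` contain `1`, are closed under products and separate points, so their linear span
is a point-separating algebra of continuous functions and approximates `g` uniformly on `K`
(`exists_expSpan_near`). It remains to approximate each `x ↦ exp (w ⬝ᵥ x)` on `K`, where `w ⬝ᵥ x`
ranges over a bounded interval; this follows from the one-dimensional theorem
(`exists_network_near_Icc`) by composing with `x ↦ w ⬝ᵥ x`.

In one dimension, cut the interval into cells on each of which `f` oscillates by at most `δ`. Start
from the constant `f (t 0)` and, for each cell `[p, q]`, add `(f q - f p) * σ (a * t + b)`, where the
affine rescaling makes `σ` nearly `0` left of `p` and nearly `1` right of `q` (`exists_step`). Such a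
term barely changes the approximation to the left of `p`, moves its value to the right of `q` from
`f p` to `f q`, and costs at most `2 * δ` inside the cell because `0 ≤ σ ≤ 1`.
-/

open Filter

/-- The functions of one hidden layer with activation `σ` on `ℝ^d`: linear combinations of the units
`x ↦ σ (∑ i, w i * x i + b)`. -/
def networks (σ : ℝ → ℝ) (d : ℕ) : Submodule ℝ ((Fin d → ℝ) → ℝ) :=
  Submodule.span ℝ {u | ∃ (w : Fin d → ℝ) (b : ℝ), u = fun x => σ ((∑ i, w i * x i) + b)}

/-- The same linear combinations for a single real input variable. -/
def networksOne (σ : ℝ → ℝ) : Submodule ℝ (ℝ → ℝ) :=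
  Submodule.span ℝ {u | ∃ a b : ℝ, u = fun t => σ (a * t + b)}

/-- The continuous function `x ↦ exp (w ⬝ᵥ x)`, as a monoid homomorphism in the frequency `w`. -/
noncomputable def expHom (d : ℕ) : Multiplicative (Fin d → ℝ) →* C(Fin d → ℝ, ℝ) where
  toFun w := ⟨fun x => Real.exp (∑ i, w.toAdd i * x i), by fun_prop⟩
  map_one' := by ext x; simp
  map_mul' u v := by ext x; simp [add_mul, Finset.sum_add_distrib, Real.exp_add]

lemma exists_expSpan_near {d : ℕ} {K : Set (Fin d → ℝ)} (hK : IsCompact K)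
    {g : (Fin d → ℝ) → ℝ} (hg : Continuous g) {ε : ℝ} (hε : 0 < ε) :
    ∃ f ∈ Submodule.span ℝ (Set.range (expHom d)), ∀ x ∈ K, |f x - g x| < ε := by
  have hsep : (Algebra.adjoin ℝ (Set.range (expHom d))).SeparatesPoints := by
    intro x y hxy
    obtain ⟨i, hi⟩ := Function.ne_iff.1 hxy
    refine ⟨_, ⟨expHom d (Multiplicative.ofAdd (Pi.single i 1)),
      Algebra.subset_adjoin ⟨_, rfl⟩, rfl⟩, ?_⟩
    simpa [expHom, Pi.single_apply] using hi
  obtain ⟨f, hf, hfg⟩ :=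
    ContinuousMap.exists_mem_subalgebra_near_continuous_of_isCompact_of_separatesPoints
      hsep ⟨g, hg⟩ hK hε
  refine ⟨f, ?_, hfg⟩
  -- the exponentials form a submonoid, so the algebra they generate is their linear span
  rw [← Subalgebra.mem_toSubmodule, Algebra.adjoin_eq_span, ← MonoidHom.coe_mrange,
    Submonoid.closure_eq] at hf
  simpa using hf

section OneDim

variable {σ : ℝ → ℝ}

lemma exists_step (hmono : Monotone σ) (hbot : Tendsto σ atBot (nhds 0))
    (htop : Tendsto σ atTop (nhds 1)) {p q η : ℝ} (hpq : p < q) (hη : 0 < η) :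
    ∃ a b : ℝ, (∀ t ≤ p, σ (a * t + b) ≤ η) ∧ ∀ t, q ≤ t → 1 - η ≤ σ (a * t + b) := by
  obtain ⟨A, hA, hA0⟩ := ((hbot.eventually_le_const hη).and (eventually_le_atBot 0)).exists
  obtain ⟨B, hB, hB0⟩ :=
    ((htop.eventually_const_le (sub_lt_self 1 hη)).and (eventually_ge_atTop 0)).exists
  have hd : 0 < q - p := sub_pos.2 hpq
  have hq : (B - A) / (q - p) * (q - p) = B - A := div_mul_cancel₀ _ hd.ne'
  have ha : 0 ≤ (B - A) / (q - p) := div_nonneg (by linarith) hd.le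
  -- the affine map sending `p` to `A` and `q` to `B`
  refine ⟨(B - A) / (q - p), A - (B - A) / (q - p) * p, fun t ht => ?_, fun t ht => ?_⟩
  · refine (hmono ?_).trans hA
    nlinarith [mul_le_mul_of_nonneg_left ht ha]
  · refine hB.trans (hmono ?_)
    nlinarith [mul_le_mul_of_nonneg_left ht ha]

lemma const_mem_networksOne (htop : Tendsto σ atTop (nhds 1)) (c : ℝ) :
    (fun _ => c) ∈ networksOne σ := by
  obtain ⟨b, hb⟩ := (htop.eventually_ne one_ne_zero).exists
  have h : (fun t : ℝ => σ (0 * t + b)) ∈ networksOne σ := Submodule.subset_span ⟨0, b, rfl⟩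
  convert (networksOne σ).smul_mem (c / σ b) h using 1
  ext t
  simp [hb]

/-- Induction over the cells of a partition `t 0 < t 1 < ⋯`. The control to the right of `t n` is
what allows the next cell to be appended. -/
lemma exists_network_near_partition (hmono : Monotone σ) (hbot : Tendsto σ atBot (nhds 0))
    (htop : Tendsto σ atTop (nhds 1)) (f : ℝ → ℝ) {t : ℕ → ℝ} (ht : StrictMono t) {δ : ℝ} (n : ℕ)
    (hosc : ∀ j < n, ∀ s ∈ Set.Icc (t j) (t (j + 1)), |f s - f (t j)| ≤ δ) :
    ∀ η > 0, ∃ N ∈ networksOne σ, (∀ s ∈ Set.Ico (t 0) (t n), |N s - f s| ≤ 2 * δ + η) ∧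
      ∀ s, t n ≤ s → |N s - f (t n)| ≤ η := by
  induction n with
  | zero =>
    intro η hη
    exact ⟨_, const_mem_networksOne htop (f (t 0)), by simp, by simp [hη.le]⟩
  | succ n ih =>
    intro η hη
    obtain ⟨N, hN, hleft, hright⟩ := ih (fun j hj => hosc j (by omega)) (η / 2) (by linarith)
    have hlt : t n < t (n + 1) := ht (Nat.lt_succ_self n)
    have hcell := hosc n (Nat.lt_succ_self n)
    set D := f (t (n + 1)) - f (t n) with hD
    have hDδ : |D| ≤ δ := hcell _ ⟨hlt.le, le_rfl⟩
    have hD0 : 0 ≤ |D| := abs_nonneg D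
    have hη' : 0 < η / 2 / (|D| + 1) := by positivity
    have hDη : |D| * (η / 2 / (|D| + 1)) ≤ η / 2 := by
      rw [mul_div_assoc', div_le_iff₀ (by positivity)]
      nlinarith
    obtain ⟨a, b, hlo, hhi⟩ := exists_step hmono hbot htop hlt hη'
    have h0 : ∀ s, 0 ≤ σ (a * s + b) := fun s => hmono.le_of_tendsto hbot _
    have h1 : ∀ s, σ (a * s + b) ≤ 1 := fun s => hmono.ge_of_tendsto htop _
    refine ⟨N + D • fun s => σ (a * s + b),
      add_mem hN (Submodule.smul_mem _ _ (Submodule.subset_span ⟨a, b, rfl⟩)), ?_, ?_⟩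
    · rintro s ⟨hs0, hs1⟩
      simp only [Pi.add_apply, Pi.smul_apply, smul_eq_mul]
      have habs : |D * σ (a * s + b)| = |D| * σ (a * s + b) := by
        rw [abs_mul, abs_of_nonneg (h0 s)]
      rcases lt_or_ge s (t n) with hs | hs
      · have e1 := hleft s ⟨hs0, hs⟩
        have e2 := mul_le_mul_of_nonneg_left (hlo s hs.le) hD0
        have e3 := abs_add_le (N s - f s) (D * σ (a * s + b))
        rw [show N s + D * σ (a * s + b) - f s = N s - f s + D * σ (a * s + b) by ring]
        linarith
      · have e1 := hright s hs
        have e2 := mul_le_mul_of_nonneg_left (h1 s) hD0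
        have e3 := abs_add_three (N s - f (t n)) (D * σ (a * s + b)) (-(f s - f (t n)))
        have e4 := hcell s ⟨hs, hs1.le⟩
        rw [abs_neg] at e3
        rw [show N s + D * σ (a * s + b) - f s
          = N s - f (t n) + D * σ (a * s + b) + -(f s - f (t n)) by ring]
        linarith
    · intro s hs
      simp only [Pi.add_apply, Pi.smul_apply, smul_eq_mul]
      have e1 := hright s (hlt.le.trans hs)
      have e2 : |D * (1 - σ (a * s + b))| ≤ |D| * (η / 2 / (|D| + 1)) := by
        rw [abs_mul, abs_of_nonneg (sub_nonneg.2 (h1 s))]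
        exact mul_le_mul_of_nonneg_left (by linarith [hhi s hs]) hD0
      have e3 := abs_sub (N s - f (t n)) (D * (1 - σ (a * s + b)))
      rw [show N s + D * σ (a * s + b) - f (t (n + 1))
        = N s - f (t n) - D * (1 - σ (a * s + b)) by rw [hD]; ring]
      linarith

lemma exists_network_near_Icc (hmono : Monotone σ) (hbot : Tendsto σ atBot (nhds 0))
    (htop : Tendsto σ atTop (nhds 1)) {f : ℝ → ℝ} (hf : Continuous f) (R : ℝ) {ε : ℝ}
    (hε : 0 < ε) : ∃ N ∈ networksOne σ, ∀ s ∈ Set.Icc (-R) R, |N s - f s| ≤ ε := by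
  -- uniform continuity is needed on a slightly larger interval: the last cell may pass beyond `R`
  have huc := (isCompact_Icc (a := -R) (b := R + 1)).uniformContinuousOn_of_continuous
    hf.continuousOn
  obtain ⟨δ, hδ, hfδ⟩ := Metric.uniformContinuousOn_iff_le.1 huc (ε / 3) (by linarith)
  set h := min δ 1 with hh
  have hh0 : 0 < h := lt_min hδ one_pos
  have hex : ∃ n : ℕ, R < -R + n * h := by
    obtain ⟨n, hn⟩ := exists_nat_gt (2 * R / h)
    exact ⟨n, by rw [div_lt_iff₀ hh0] at hn; linarith⟩
  classical
  -- the least number of cells that covers the interval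
  have hn := Nat.find_spec hex
  have hmin : ∀ j < Nat.find hex, -R + j * h ≤ R := fun j hj => not_lt.1 (Nat.find_min hex hj)
  set n := Nat.find hex
  have ht : StrictMono fun j : ℕ => -R + j * h := by
    intro i j hij
    have : (i : ℝ) < j := by exact_mod_cast hij
    have := mul_lt_mul_of_pos_right this hh0
    simpa using this
  obtain ⟨N, hN, hNf, -⟩ := exists_network_near_partition hmono hbot htop f ht (δ := ε / 3) n
    (by
      rintro j hj s ⟨hs1, hs2⟩
      have hjR := hmin j hj
      have hj0 : 0 ≤ (j : ℝ) * h := by positivity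
      push_cast at hs2
      have hle1 : h ≤ 1 := min_le_right _ _
      have hleδ : h ≤ δ := min_le_left _ _
      refine hfδ s ⟨by linarith, by linarith⟩ _ ⟨by linarith, by linarith⟩ ?_
      rw [Real.dist_eq, abs_of_nonneg (by linarith)]
      linarith) (ε / 3) (by linarith)
  refine ⟨N, hN, fun s hs => (hNf s ⟨by simpa using hs.1, hs.2.trans_lt hn⟩).trans (by linarith)⟩

end OneDim

lemma comp_mem_networks {σ : ℝ → ℝ} {d : ℕ} (w : Fin d → ℝ) {N : ℝ → ℝ}
    (hN : N ∈ networksOne σ) : (fun x => N (∑ i, w i * x i)) ∈ networks σ d := by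
  have hle : networksOne σ ≤
      (networks σ d).comap (LinearMap.funLeft ℝ ℝ fun x : Fin d → ℝ => ∑ i, w i * x i) := by
    refine Submodule.span_le.2 ?_
    rintro _ ⟨a, b, rfl⟩
    refine Submodule.subset_span ⟨fun i => a * w i, b, ?_⟩
    ext x
    simp [LinearMap.funLeft_apply, Finset.mul_sum, mul_assoc]
  exact hle hN

lemma exists_network_near_expSpan {σ : ℝ → ℝ} (hmono : Monotone σ)
    (hbot : Tendsto σ atBot (nhds 0)) (htop : Tendsto σ atTop (nhds 1)) {d : ℕ}
    {K : Set (Fin d → ℝ)} (hK : IsCompact K) {f : C(Fin d → ℝ, ℝ)}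
    (hf : f ∈ Submodule.span ℝ (Set.range (expHom d))) :
    ∀ ε > 0, ∃ N ∈ networks σ d, ∀ x ∈ K, |N x - f x| ≤ ε := by
  induction hf using Submodule.span_induction with
  | mem f hf =>
    obtain ⟨w, rfl⟩ := hf
    intro ε hε
    have hcont : Continuous fun x : Fin d → ℝ => ∑ i, w.toAdd i * x i := by fun_prop
    obtain ⟨R, hR⟩ := hK.exists_bound_of_continuousOn hcont.continuousOn
    obtain ⟨N, hN, hNe⟩ :=
      exists_network_near_Icc hmono hbot htop Real.continuous_exp R hε
    exact ⟨_, comp_mem_networks w.toAdd hN, fun x hx => hNe _ (abs_le.1 (hR x hx))⟩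
  | zero => exact fun ε hε => ⟨0, zero_mem _, by simp [hε.le]⟩
  | add f₁ f₂ _ _ ih₁ ih₂ =>
    intro ε hε
    obtain ⟨N₁, hN₁, h₁⟩ := ih₁ (ε / 2) (by linarith)
    obtain ⟨N₂, hN₂, h₂⟩ := ih₂ (ε / 2) (by linarith)
    refine ⟨N₁ + N₂, add_mem hN₁ hN₂, fun x hx => ?_⟩
    have e := abs_add_le (N₁ x - f₁ x) (N₂ x - f₂ x)
    rw [Pi.add_apply, ContinuousMap.add_apply, add_sub_add_comm]
    linarith [h₁ x hx, h₂ x hx]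
  | smul c f _ ih =>
    intro ε hε
    obtain ⟨N, hN, h⟩ := ih (ε / (|c| + 1)) (by positivity)
    refine ⟨c • N, Submodule.smul_mem _ _ hN, fun x hx => ?_⟩
    have e := h x hx
    rw [le_div_iff₀ (by positivity)] at e
    rw [Pi.smul_apply, ContinuousMap.smul_apply, smul_eq_mul, smul_eq_mul, ← mul_sub, abs_mul]
    nlinarith [abs_nonneg (N x - f x)]

/-- Scalar-output universal approximation theorem (Hornik et al.): a single-hidden-layer
feedforward network with continuous squashing activation `σ` uniformly approximates any
continuous real-valued function on a compact subset of `ℝ^d` to accuracy `ε`. -/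
theorem stmt_6 (σ : ℝ → ℝ) (hσ_cont : Continuous σ) (hσ_mono : Monotone σ)
    (hσ_bot : Tendsto σ atBot (nhds 0)) (hσ_top : Tendsto σ atTop (nhds 1))
    (d : ℕ) (K : Set (Fin d → ℝ)) (hK : IsCompact K)
    (g : (Fin d → ℝ) → ℝ) (hg : Continuous g) (ε : ℝ) (hε : 0 < ε) :
    ∃ (M : ℕ) (_ : 1 ≤ M) (c : Fin M → ℝ) (w : Fin M → (Fin d → ℝ)) (b : Fin M → ℝ),
      ∀ x ∈ K, |(∑ m, c m * σ ((∑ i, w m i * x i) + b m)) - g x| ≤ ε := by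
  obtain ⟨f, hf, hfg⟩ := exists_expSpan_near hK hg (half_pos hε)
  obtain ⟨N, hN, hNf⟩ :=
    exists_network_near_expSpan hσ_mono hσ_bot hσ_top hK hf (ε / 2) (half_pos hε)
  obtain ⟨M, c, u, rfl⟩ := Submodule.mem_span_set'.1 hN
  choose w b hu using fun m => (u m).2
  -- a unit of output weight `0` is prepended, since `M` may be `0`
  refine ⟨M + 1, by omega, Fin.cons 0 c, Fin.cons 0 w, Fin.cons 0 b, fun x hx => ?_⟩
  have e1 := hNf x hx
  simp only [Finset.sum_apply, Pi.smul_apply, smul_eq_mul, hu] at e1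
  rw [Fin.sum_univ_succ]
  simp only [Fin.cons_zero, Fin.cons_succ, zero_mul, zero_add]
  exact (abs_sub_le _ (f x) _).trans (by linarith [hfg x hx])
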